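/- Let β be a unital action of a finite groupoid 𝒢 on a ring R such that R is a β-Galois extension of R^β. If R^β is a separable extension of C(R)^β, then the skew groupoid ring R ⋆_β 𝒢 is a separable extension of C(R)^β. -/

import Mathlib

open CategoryTheory TensorProduct

/-- A unital action `β = ({E_g}, {β_g})` of a finite groupoid `𝒢` (objects `Obj`,
morphisms `a ⟶ b`) on a ring `R` with `R = ⊕_{e ∈ 𝒢₀} E_e`.  The unital ideals
`E_e` are encoded by their central, pairwise-orthogonal identity elements
`one e` summing to `1` (so `E_e = R·(one e)`), and `β_g : E_{g⁻¹} → E_g`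
(for `g : a ⟶ b`, i.e. `d(g) = a`, `r(g) = b`) is encoded by the map
`act g : R → R`, `x ↦ β_g(x·1_{g⁻¹})`. -/
structure GpdAction (Obj : Type) [Groupoid Obj] [Fintype Obj] (R : Type) [Ring R] where
  one : Obj → R
  one_central : ∀ (e : Obj) (r : R), one e * r = r * one e
  one_idem : ∀ e : Obj, one e * one e = one e
  one_orth : ∀ e f : Obj, e ≠ f → one e * one f = 0
  sum_one : ∑ e : Obj, one e = 1
  act : ∀ {a b : Obj}, (a ⟶ b) → R → R
  act_zero : ∀ {a b : Obj} (g : a ⟶ b), act g 0 = 0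
  act_add : ∀ {a b : Obj} (g : a ⟶ b) (x y : R), act g (x + y) = act g x + act g y
  act_neg : ∀ {a b : Obj} (g : a ⟶ b) (x : R), act g (-x) = -act g x
  act_mul : ∀ {a b : Obj} (g : a ⟶ b) (x y : R), act g (x * y) = act g x * act g y
  act_proj : ∀ {a b : Obj} (g : a ⟶ b) (x : R), act g (x * one a) = act g x
  act_mem : ∀ {a b : Obj} (g : a ⟶ b) (x : R), act g x * one b = act g x
  act_one : ∀ {a b : Obj} (g : a ⟶ b), act g (one a) = one b
  act_id : ∀ (e : Obj) (x : R), act (𝟙 e) x = x * one e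
  act_comp : ∀ {a b c : Obj} (g : a ⟶ b) (h : b ⟶ c) (x : R),
    act (g ≫ h) x = act h (act g x)
  act_inv : ∀ {a b : Obj} (g : a ⟶ b) (x : R), act (Groupoid.inv g) (act g x) = x * one a

/-- The set of morphisms of the groupoid, as a single type. -/
abbrev Mor (Obj : Type) [Groupoid Obj] : Type := Σ a b : Obj, a ⟶ b

variable {Obj : Type} [Groupoid Obj] [Fintype Obj] {R : Type} [Ring R]

/-- The subring of invariants `{r ∈ R ∣ β_g(r·1_{g⁻¹}) = r·1_g}` under all
morphisms `g` satisfying the predicate `P` (e.g. the morphisms of a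
subgroupoid, or all morphisms of `𝒢`). -/
def GpdAction.invSubring (β : GpdAction Obj R)
    (P : ∀ ⦃a b : Obj⦄, (a ⟶ b) → Prop) : Subring R where
  carrier := {r : R | ∀ ⦃a b : Obj⦄ (g : a ⟶ b), P g → β.act g r = r * β.one b}
  zero_mem' := by intro a b g _; rw [β.act_zero, zero_mul]
  one_mem' := by
    intro a b g _
    have h1 : β.act g (1 : R) = β.act g (β.one a) := by
      rw [← β.act_proj g 1, one_mul]
    rw [h1, β.act_one, one_mul]
  add_mem' := by
    intro x y hx hy a b g hg
    rw [β.act_add, hx g hg, hy g hg, add_mul]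
  neg_mem' := by
    intro x hx a b g hg
    rw [β.act_neg, hx g hg, neg_mul]
  mul_mem' := by
    intro x y hx hy a b g hg
    rw [β.act_mul, hx g hg, hy g hg, mul_assoc, β.one_central b (y * β.one b),
      mul_assoc, β.one_idem, ← mul_assoc]

/-- The invariants `R^β` under the whole groupoid. -/
def GpdAction.inv (β : GpdAction Obj R) : Subring R :=
  β.invSubring fun _ _ _ => True

/-- The invariants `R^{β_ℋ}` under a subgroupoid `ℋ`. -/
def GpdAction.invH (β : GpdAction Obj R) (H : Subgroupoid Obj) : Subring R :=
  β.invSubring fun _ _ g => g ∈ H.arrows _ _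

/-- `C(R)^β = C(R) ∩ R^β`. -/
def GpdAction.centerInv (β : GpdAction Obj R) : Subring R :=
  Subring.center R ⊓ β.inv

/-- `R` is a `β`-Galois extension of `R^β`: there is a Galois coordinate system
`x_i, y_i` with `Σ_i x_i·β_g(y_i·1_{g⁻¹}) = Σ_{e ∈ 𝒢₀} δ_{e,g}·1_e` for all `g`. -/
def GpdAction.IsGaloisExt (β : GpdAction Obj R) : Prop :=
  ∃ (n : ℕ) (x y : Fin n → R),
    (∀ e : Obj, ∑ i, x i * β.act (𝟙 e) (y i * β.one e) = β.one e) ∧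
    (∀ (a b : Obj) (g : a ⟶ b), ¬(∃ _ : a = b, HEq g (𝟙 a)) →
      ∑ i, x i * β.act g (y i * β.one a) = 0)

/-- `J_g = {r ∈ E_g ∣ r·β_g(x·1_{g⁻¹}) = x·r for all x ∈ R}`, for a morphism
`m = (a, b, g)`. -/
def GpdAction.J (β : GpdAction Obj R) (m : Mor Obj) : Set R :=
  {r : R | r * β.one m.2.1 = r ∧ ∀ x : R, r * β.act m.2.2 (x * β.one m.1) = x * r}

/-- `S_ℋ = {h ∈ ℋ ∣ J_h ≠ {0}}`, as a set of morphisms. -/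
def GpdAction.SArr (β : GpdAction Obj R) (H : Subgroupoid Obj) : Set (Mor Obj) :=
  {m : Mor Obj | m.2.2 ∈ H.arrows m.1 m.2.1 ∧ β.J m ≠ {0}}

/-- A ring extension `A ⊇ k` (with `k` commutative, mapping centrally into `A`)
is separable if there is a separability element `z ∈ A ⊗_k A` with
`μ(z) = 1` and `(a ⊗ 1) z = z (1 ⊗ a)` for all `a ∈ A`. -/
def IsSepExt (k A : Type) [CommRing k] [Ring A] [Algebra k A] : Prop :=
  ∃ z : A ⊗[k] A,
    LinearMap.mul' k A z = 1 ∧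
    ∀ a : A, ((a ⊗ₜ[k] (1 : A)) * z = z * ((1 : A) ⊗ₜ[k] a))

/-- A subring of a ring consisting of central elements is commutative. -/
def commRingOfCentral (R : Type) [Ring R] (k : Subring R)
    (h : ∀ x ∈ k, ∀ r : R, x * r = r * x) : CommRing k :=
  { (inferInstance : Ring k) with
    mul_comm := fun a b => Subtype.ext (h a.1 a.2 b.1) }

/-- `T` is a separable extension of `k`, for subrings `k ≤ T` of `R` with `k`
central in `R`. -/
def SepOver (R : Type) [Ring R] (k T : Subring R) : Prop :=
  ∃ (hc : ∀ x ∈ k, ∀ r : R, x * r = r * x) (hle : k ≤ T),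
    letI : CommRing k := commRingOfCentral R k hc
    letI : Algebra k T := RingHom.toAlgebra' (Subring.inclusion hle)
      (fun c x => Subtype.ext (hc c.1 c.2 x.1))
    IsSepExt k T

def Cas (k : Type) {B : Type} [CommRing k] [Ring B] [Algebra k B] {ι : Type} [Fintype ι]
    (s t : ι → B) : Prop :=
  ∀ (V : Type) [AddCommGroup V] (f : B → B → V),
    (∀ x x' y, f (x + x') y = f x y + f x' y) →
    (∀ x y y', f x (y + y') = f x y + f x y') →
    (∀ (c : k) x y, f (c • x) y = f x (c • y)) →
    ∀ x, ∑ i, f (x * s i) (t i) = ∑ i, f (s i) (t i * x)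

theorem cas_of_sep {k B : Type} [CommRing k] [Ring B] [Algebra k B] (h : IsSepExt k B) :
    ∃ (n : ℕ) (s t : Fin n → B), ∑ i, s i * t i = 1 ∧ Cas k s t := by
  obtain ⟨z, hz1, hz2⟩ := h
  obtain ⟨n, s, t, rfl⟩ : ∃ (n : ℕ) (s t : Fin n → B), z = ∑ i, s i ⊗ₜ[k] t i := by
    obtain ⟨S, rfl⟩ := TensorProduct.exists_finset z
    refine ⟨S.card, fun i => (S.equivFin.symm i).1.1, fun i => (S.equivFin.symm i).1.2, ?_⟩
    rw [← Finset.sum_coe_sort S]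
    exact (Equiv.sum_comp S.equivFin.symm (fun p : S => p.1.1 ⊗ₜ[k] p.1.2)).symm
  refine ⟨n, s, t, by simpa using hz1, ?_⟩
  intro V _ f h1 h2 h3 x
  let F : B →+ B →+ V := AddMonoidHom.mk' (fun x => AddMonoidHom.mk' (f x) (h2 x))
    (fun a b => by ext y; exact h1 a b y)
  have := congrArg (TensorProduct.liftAddHom (R := k) F h3) (hz2 x)
  simp only [Finset.mul_sum, Finset.sum_mul, Algebra.TensorProduct.tmul_mul_tmul, map_sum,
    one_mul, mul_one] at this
  exact this

theorem exists_proj {Z V : Type} [CommRing Z] [AddCommGroup V] [Module Z V] (m : Ideal Z)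
    [hm : m.IsMaximal] (hV : ∀ c ∈ m, ∀ v : V, c • v = 0) (N : Submodule Z V) :
    ∃ p : V →ₗ[Z] V, (∀ v, p v ∈ N) ∧ ∀ v ∈ N, p v = v := by
  have hT : Module.IsTorsionBySet Z V m := fun v c => hV c.1 c.2 v
  let _ : Module (Z ⧸ m) V := hT.module
  let _ : Field (Z ⧸ m) := Ideal.Quotient.field m
  let N' : Submodule (Z ⧸ m) V :=
    { carrier := N
      zero_mem' := N.zero_mem
      add_mem' := N.add_mem
      smul_mem' := by
        intro c x hx
        obtain ⟨c, rfl⟩ := Ideal.Quotient.mk_surjective c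
        exact N.smul_mem c hx }
  obtain ⟨q, hq⟩ := LinearMap.exists_leftInverse_of_injective N'.subtype
    (LinearMap.ker_eq_bot.mpr N'.injective_subtype)
  refine ⟨{ toFun := fun v => (q v : V), map_add' := by simp, map_smul' := ?_ }, ?_, ?_⟩
  · intro c v
    have : q (Ideal.Quotient.mk m c • v) = Ideal.Quotient.mk m c • q v := map_smul q _ _
    exact congrArg Subtype.val this
  · intro v; exact (q v).2
  · intro v hv
    have := LinearMap.congr_fun hq ⟨v, hv⟩
    exact congrArg Subtype.val this

theorem ideal_le {Z Λ : Type} [CommRing Z] [Ring Λ] [Algebra Z Λ] {ι : Type} [Fintype ι]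
    (s t : ι → Λ) (h1 : ∑ i, s i * t i = 1) (hc : Cas Z s t)
    (hπ : ∀ x, ∃ c : Z, ∑ i, s i * x * t i = algebraMap Z Λ c)
    (N : Submodule Z Λ) (hl : ∀ x, ∀ n ∈ N, x * n ∈ N) (hr : ∀ x, ∀ n ∈ N, n * x ∈ N)
    (m : Ideal Z) [hm : m.IsMaximal] (hNm : ∀ c, algebraMap Z Λ c ∈ N → c ∈ m) :
    ∀ n ∈ N, n ∈ Submodule.span Λ (algebraMap Z Λ '' m) := by
  set L : Submodule Λ Λ := Submodule.span Λ (algebraMap Z Λ '' m) with hL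
  have hcL : ∀ c ∈ m, ∀ x : Λ, x * algebraMap Z Λ c ∈ L := fun c hc x =>
    L.smul_mem x (Submodule.subset_span ⟨c, hc, rfl⟩)
  have hLr : ∀ l ∈ L, ∀ x, l * x ∈ L := by
    intro l hl
    induction hl using Submodule.span_induction with
    | mem y hy =>
      obtain ⟨c, hc, rfl⟩ := hy
      intro x
      rw [Algebra.commutes]; exact hcL c hc x
    | zero => intro x; simp
    | add a b _ _ ha hb => intro x; rw [add_mul]; exact L.add_mem (ha x) (hb x)
    | smul a b _ hb => intro x; rw [smul_mul_assoc]; exact L.smul_mem _ (hb x)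
  obtain ⟨p, hp1, hp2⟩ := exists_proj (V := Λ ⧸ L) m (by
    intro c hc v
    obtain ⟨x, rfl⟩ := Submodule.Quotient.mk_surjective L v
    rw [← Submodule.Quotient.mk_smul, Submodule.Quotient.mk_eq_zero, Algebra.smul_def,
      Algebra.commutes]
    exact hcL c hc x) (N.map (L.mkQ.restrictScalars Z))
  have hcas := hc (Λ ⧸ L) (fun u v => u • p (Submodule.Quotient.mk v))
    (fun x x' y => add_smul _ _ _)
    (fun x y y' => by simp [smul_add])
    (fun c x y => by
      rw [Submodule.Quotient.mk_smul, map_smul, smul_assoc, smul_comm])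
  -- the element e
  obtain ⟨e, heN, he⟩ : ∃ e ∈ N, (Submodule.Quotient.mk e : Λ ⧸ L)
      = ∑ i, s i • p (Submodule.Quotient.mk (t i)) := by
    choose e he1 he2 using fun i => hp1 (Submodule.Quotient.mk (t i))
    refine ⟨∑ i, s i * e i, N.sum_mem fun i _ => hl _ _ (he1 i), ?_⟩
    rw [← Submodule.mkQ_apply, map_sum]
    refine Finset.sum_congr rfl fun i _ => ?_
    rw [← he2 i]; rfl
  have hne : ∀ n ∈ N, n * e - n ∈ L := by
    intro n hn
    rw [← Submodule.Quotient.mk_eq_zero, Submodule.Quotient.mk_sub, ← smul_eq_mul,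
      Submodule.Quotient.mk_smul, he, Finset.smul_sum, sub_eq_zero]
    have h := hcas n
    simp only [mul_smul] at h
    rw [h]
    have : ∀ i, s i • p (Submodule.Quotient.mk (t i * n)) =
        (Submodule.Quotient.mk (s i * t i * n) : Λ ⧸ L) := by
      intro i
      rw [hp2 (Submodule.Quotient.mk (t i * n)) ⟨t i * n, hl _ _ hn, rfl⟩, mul_assoc]; rfl
    simp only [this]
    conv_rhs => rw [← one_mul n, ← h1, Finset.sum_mul]
    exact (map_sum L.mkQ _ _).symm
  obtain ⟨c, hc'⟩ := hπ e
  have hcm : c ∈ m := hNm c (by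
    rw [← hc']; exact N.sum_mem fun i _ => hr _ _ (hl _ _ heN))
  intro n hn
  have h2 : n * algebraMap Z Λ c - n ∈ L := by
    have : n * algebraMap Z Λ c - n = ∑ i, (n * s i * e - n * s i) * t i := by
      rw [← hc']
      conv_lhs => rw [← mul_one n, ← h1]
      simp only [sub_mul, Finset.sum_sub_distrib, Finset.mul_sum, mul_assoc]
      simp only [← Finset.mul_sum, h1, mul_one]
    rw [this]
    exact L.sum_mem fun i _ => hLr _ (hne _ (hr _ _ hn)) _
  have := L.sub_mem (hcL c hcm n) h2
  simpa using this

theorem cas_tensor {Z B : Type} [CommRing Z] [Ring B] [Algebra Z B] {ι : Type} [Fintype ι]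
    (s t : ι → B) (hc : Cas Z s t) :
    Cas Z (fun p : ι × ι => s p.1 ⊗ₜ[Z] MulOpposite.op (t p.2))
      (fun p : ι × ι => t p.1 ⊗ₜ[Z] MulOpposite.op (s p.2)) := by
  intro V _ f h1 h2 h3 x
  have hz1 : ∀ y, f 0 y = 0 := fun y => by simpa using h1 0 0 y
  have hz2 : ∀ y, f y 0 = 0 := fun y => by simpa using h2 y 0 0
  induction x with
  | zero => simp [hz1, hz2]
  | add a b ha hb => simp only [add_mul, mul_add, h1, h2, Finset.sum_add_distrib, ha, hb]
  | tmul a b =>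
    simp only [Algebra.TensorProduct.tmul_mul_tmul, Fintype.sum_prod_type]
    rw [Finset.sum_comm]
    have e1 : ∀ j, ∑ i, f ((a * s i) ⊗ₜ[Z] (b * MulOpposite.op (t j)))
          (t i ⊗ₜ[Z] MulOpposite.op (s j)) =
        ∑ i, f (s i ⊗ₜ[Z] (b * MulOpposite.op (t j)))
          ((t i * a) ⊗ₜ[Z] MulOpposite.op (s j)) := fun j =>
      hc V (fun u v => f (u ⊗ₜ[Z] (b * MulOpposite.op (t j)))
          (v ⊗ₜ[Z] MulOpposite.op (s j)))
        (fun _ _ _ => by simp only [TensorProduct.add_tmul, h1])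
        (fun _ _ _ => by simp only [TensorProduct.add_tmul, h2])
        (fun _ _ _ => by simp only [← TensorProduct.smul_tmul', h3]) a
    simp only [e1]
    rw [Finset.sum_comm]
    refine Finset.sum_congr rfl fun i _ => ?_
    have e2 := hc V (fun u v => f (s i ⊗ₜ[Z] MulOpposite.op v)
          ((t i * a) ⊗ₜ[Z] MulOpposite.op u))
        (fun _ _ _ => by simp only [MulOpposite.op_add, TensorProduct.tmul_add, h2])
        (fun _ _ _ => by simp only [MulOpposite.op_add, TensorProduct.tmul_add, h1])
        (fun _ _ _ => by simp only [MulOpposite.op_smul, TensorProduct.tmul_smul, h3])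
        b.unop
    simpa using e2.symm

theorem op_sum_aux {B : Type} [Ring B] {ι : Type} (S : Finset ι) (f : ι → B) :
    MulOpposite.op (∑ i ∈ S, f i) = ∑ i ∈ S, MulOpposite.op (f i) :=
  map_sum (MulOpposite.opAddEquiv : B ≃+ Bᵐᵒᵖ) f S

theorem dual_basis {Z B : Type} [CommRing Z] [Ring B] [Algebra Z B] {ι : Type} [Fintype ι]
    (hinj : Function.Injective (algebraMap Z B))
    (s t : ι → B) (h1 : ∑ i, s i * t i = 1) (hc : Cas Z s t)
    (hπ : ∀ x, ∃ c : Z, ∑ i, s i * x * t i = algebraMap Z B c) :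
    ∃ (n : ℕ) (a : Fin n → B) (Y : Fin n → (B ⊗[Z] Bᵐᵒᵖ)),
      ∀ w, w = ∑ l, (∑ i, s i * (AlgHom.mulLeftRight Z B (Y l) w) * t i) * a l := by
  let M := AlgHom.mulLeftRight Z B
  let ζ : B ⊗[Z] Bᵐᵒᵖ := ∑ i, s i ⊗ₜ[Z] MulOpposite.op (t i)
  have hζ : ∀ w, M ζ w = ∑ i, s i * w * t i := by
    intro w
    simp [ζ, M, map_sum, LinearMap.sum_apply]
  let N : Submodule Z (B ⊗[Z] Bᵐᵒᵖ) := Submodule.span Z (Set.range fun p : (B ⊗[Z] Bᵐᵒᵖ) × (B ⊗[Z] Bᵐᵒᵖ) => p.1 * ζ * p.2)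
  have hl : ∀ x, ∀ n ∈ N, x * n ∈ N := by
    intro x n hn
    induction hn using Submodule.span_induction with
    | mem y hy =>
      obtain ⟨p, rfl⟩ := hy
      exact Submodule.subset_span ⟨(x * p.1, p.2), by simp [mul_assoc]⟩
    | zero => simp
    | add a b _ _ ha hb => rw [mul_add]; exact N.add_mem ha hb
    | smul a b _ hb => rw [mul_smul_comm]; exact N.smul_mem _ hb
  have hr : ∀ x, ∀ n ∈ N, n * x ∈ N := by
    intro x n hn
    induction hn using Submodule.span_induction with
    | mem y hy =>
      obtain ⟨p, rfl⟩ := hy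
      exact Submodule.subset_span ⟨(p.1, p.2 * x), by simp [mul_assoc]⟩
    | zero => simp
    | add a b _ _ ha hb => rw [add_mul]; exact N.add_mem ha hb
    | smul a b _ hb => rw [smul_mul_assoc]; exact N.smul_mem _ hb
  have hone : (1 : B ⊗[Z] Bᵐᵒᵖ) ∈ N := by
    by_contra hcon
    let J : Ideal Z := N.comap (Algebra.linearMap Z (B ⊗[Z] Bᵐᵒᵖ))
    have hJ : J ≠ ⊤ := by
      intro h
      have : (1 : Z) ∈ J := by rw [h]; trivial
      apply hcon
      have h2 : algebraMap Z (B ⊗[Z] Bᵐᵒᵖ) 1 ∈ N := this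
      rwa [map_one] at h2
    obtain ⟨m, hm, hJm⟩ := Ideal.exists_le_maximal J hJ
    have key := ideal_le (Z := Z) (Λ := B ⊗[Z] Bᵐᵒᵖ) _ _ ?_ (cas_tensor s t hc) ?_ N hl hr m
      (fun c hcN => hJm hcN) ζ (Submodule.subset_span ⟨(1, 1), by simp⟩)
    · have : ∀ x ∈ Submodule.span (B ⊗[Z] Bᵐᵒᵖ) (algebraMap Z (B ⊗[Z] Bᵐᵒᵖ) '' m), ∀ y : B ⊗[Z] Bᵐᵒᵖ,
          ∃ c ∈ m, M ζ (M (y * x) 1) = algebraMap Z B c := by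
        intro x hx
        induction hx using Submodule.span_induction with
        | mem x hx =>
          obtain ⟨c, hc, rfl⟩ := hx
          intro y
          obtain ⟨d, hd⟩ := hπ (M y 1)
          refine ⟨c * d, m.mul_mem_right _ hc, ?_⟩
          rw [← Algebra.commutes, ← Algebra.smul_def, map_smul, LinearMap.smul_apply, map_smul,
            hζ, hd, Algebra.smul_def, map_mul]
        | zero => intro y; exact ⟨0, m.zero_mem, by simp⟩
        | add a b _ _ ha hb =>
          intro y
          obtain ⟨c, hc, h⟩ := ha y
          obtain ⟨d, hd, h'⟩ := hb y
          exact ⟨c + d, m.add_mem hc hd, by rw [mul_add, map_add, LinearMap.add_apply, map_add, h, h', map_add]⟩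
        | smul a b _ hb =>
          intro y
          obtain ⟨c, hc, h⟩ := hb (y * a)
          exact ⟨c, hc, by rw [smul_eq_mul, ← mul_assoc, h]⟩
      obtain ⟨c, hcm, h⟩ := this ζ key 1
      have h' : algebraMap Z B c = 1 := by
        rw [← h, one_mul, hζ, hζ]; simp [h1]
      have : c = 1 := hinj (by rw [h', map_one])
      exact hm.ne_top ((Ideal.eq_top_iff_one m).mpr (this ▸ hcm))
    · simp only [Algebra.TensorProduct.tmul_mul_tmul, Fintype.sum_prod_type,
        ← TensorProduct.tmul_sum, ← TensorProduct.sum_tmul, ← MulOpposite.op_mul,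
        ← op_sum_aux, h1]
      rfl
    · intro x
      induction x with
      | zero => exact ⟨0, by simp⟩
      | add a b ha hb =>
        obtain ⟨c, h⟩ := ha
        obtain ⟨d, h'⟩ := hb
        exact ⟨c + d, by simp only [mul_add, add_mul, Finset.sum_add_distrib, h, h', map_add]⟩
      | tmul a b =>
        obtain ⟨c, h⟩ := hπ a
        obtain ⟨d, h'⟩ := hπ b.unop
        refine ⟨c * d, ?_⟩
        have e : ∀ j, MulOpposite.op (t j) * b * MulOpposite.op (s j) =
          MulOpposite.op (s j * b.unop * t j) := by intro j; simp [mul_assoc]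
        simp only [Algebra.TensorProduct.tmul_mul_tmul, Fintype.sum_prod_type, e,
          ← TensorProduct.tmul_sum, ← TensorProduct.sum_tmul, ← op_sum_aux, h, h']
        rw [map_mul, ← Algebra.smul_def, Algebra.algebraMap_eq_smul_one,
          ← TensorProduct.smul_tmul', Algebra.algebraMap_eq_smul_one, MulOpposite.op_smul,
          TensorProduct.tmul_smul, Algebra.algebraMap_eq_smul_one]
        rfl
  obtain ⟨n, g, y, hg⟩ := Submodule.mem_span_set'.mp hone
  choose q hq using fun l => (y l).2
  refine ⟨n, fun l => g l • M (q l).1 1, fun l => (q l).2, fun w => ?_⟩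
  have h := congrArg (fun x => M x w) hg
  simp only [map_one, Module.End.one_apply] at h
  refine h.symm.trans ?_
  rw [map_sum, LinearMap.sum_apply]
  refine Finset.sum_congr rfl fun l _ => ?_
  obtain ⟨d, hd⟩ := hπ (M (q l).2 w)
  have h4 : M (q l).1 (algebraMap Z B d) = d • M (q l).1 1 := by
    rw [Algebra.algebraMap_eq_smul_one, map_smul]
  have hq' : (q l).1 * ζ * (q l).2 = (y l).1 := hq l
  change _ = (∑ i, s i * M (q l).2 w * t i) * (g l • M (q l).1 1)
  rw [hd, ← hq', map_smul, map_mul, map_mul, LinearMap.smul_apply, Module.End.mul_apply,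
    Module.End.mul_apply, hζ, hd, h4, ← Algebra.smul_def, smul_comm]

theorem one_mem_of_sep {k B : Type} [CommRing k] [Ring B] [Algebra k B] (h : IsSepExt k B)
    (I : AddSubgroup B) (hl : ∀ x, ∀ n ∈ I, x * n ∈ I) (hr : ∀ x, ∀ n ∈ I, n * x ∈ I)
    {κ : Type} [Fintype κ] (p : κ → B) (hp : ∀ i, p i ∈ I)
    (hI : ∀ w ∈ I, ∃ q : κ → B, (∀ i, q i ∈ I) ∧ w = ∑ i, p i * q i)
    (hann : ∀ c : B, (∀ w ∈ I, c * w = 0) → (∀ x, c * x = x * c) → c = 0) : (1 : B) ∈ I := by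
  obtain ⟨n, s, t, h1, hcas⟩ := cas_of_sep h
  let Z := Subring.center B
  have hZs : ∀ (c : Z) (x : B), c • x = (c : B) * x := fun c x => rfl
  have hc : Cas Z s t := by
    intro V _ f a1 a2 a3
    refine hcas V f a1 a2 (fun c x y => ?_)
    have := a3 ⟨algebraMap k B c, Subring.mem_center_iff.mpr fun g =>
      (Algebra.commutes c g).symm⟩ x y
    simpa only [hZs, Algebra.smul_def] using this
  have hπ : ∀ x, ∃ c : Z, ∑ i, s i * x * t i = algebraMap Z B c := by
    intro x
    refine ⟨⟨∑ i, s i * x * t i, Subring.mem_center_iff.mpr fun g => ?_⟩, rfl⟩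
    have := hcas B (fun u v => u * x * v) (by intros; simp only [add_mul])
      (by intros; simp only [mul_add]) (by intros; simp) g
    simpa only [Finset.mul_sum, Finset.sum_mul, mul_assoc] using this
  obtain ⟨N, a, Y, hY⟩ := dual_basis (Z := Z) Subtype.val_injective s t h1 hc hπ
  have hM : ∀ (x : B ⊗[Z] Bᵐᵒᵖ), ∀ w ∈ I, AlgHom.mulLeftRight Z B x w ∈ I := by
    intro x w hw
    induction x with
    | zero => simp [I.zero_mem]
    | add a b ha hb => rw [map_add]; exact I.add_mem ha hb
    | tmul a b => rw [AlgHom.mulLeftRight_apply]; exact hr _ _ (hl _ _ hw)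
  let I' : Submodule Z B := { I with smul_mem' := fun c x hx => hl _ _ hx }
  have hII : ∀ x, x ∈ I' ↔ x ∈ I := fun x => Iff.rfl
  let J : Ideal Z := I'.comap (Algebra.linearMap Z B)
  have hJ : ∀ c : Z, c ∈ J ↔ (c : B) ∈ I := fun c => Iff.rfl
  have hdec : ∀ w ∈ I, ∃ d : Fin N → Z, (∀ l, d l ∈ J) ∧ w = ∑ l, (d l : B) * a l := by
    intro w hw
    choose d hd using fun l => hπ (AlgHom.mulLeftRight Z B (Y l) w)
    refine ⟨d, fun l => ?_, ?_⟩
    · rw [hJ]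
      have : ((d l : Z) : B) = _ := (hd l).symm
      rw [this]
      exact I.sum_mem fun i _ => hr _ _ (hl _ _ (hM _ _ hw))
    · conv_lhs => rw [hY w]
      exact Finset.sum_congr rfl fun l _ => by rw [hd l]; rfl
  have hcomm : ∀ (c : Z) (x : B), (c : B) * x = x * c := fun c x =>
    (Subring.mem_center_iff.mp c.2 x).symm
  have hpq : ∀ w ∈ I, ∃ d : κ → Fin N → Z, (∀ i l, d i l ∈ J) ∧
      w = ∑ i, ∑ l, d i l • (p i * a l) := by
    intro w hw
    obtain ⟨q, hq, hw'⟩ := hI w hw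
    choose d hd1 hd2 using fun i => hdec (q i) (hq i)
    refine ⟨d, hd1, ?_⟩
    rw [hw']
    refine Finset.sum_congr rfl fun i _ => ?_
    conv_lhs => rw [hd2 i, Finset.mul_sum]
    refine Finset.sum_congr rfl fun l _ => ?_
    rw [hZs, ← mul_assoc, ← mul_assoc, hcomm]
  have hfg : I'.FG := by
    have : I' = Submodule.span Z (Set.range fun x : κ × Fin N => p x.1 * a x.2) := by
      apply le_antisymm
      · intro w hw
        obtain ⟨d, -, rfl⟩ := hpq w hw
        exact Submodule.sum_mem _ fun i _ => Submodule.sum_mem _ fun l _ =>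
          Submodule.smul_mem _ _ (Submodule.subset_span ⟨(i, l), rfl⟩)
      · rw [Submodule.span_le]
        rintro _ ⟨x, rfl⟩
        exact hr _ _ (hp _)
    rw [this]
    exact Submodule.fg_span (Set.finite_range _)
  obtain ⟨r, hr1, hr2⟩ := Submodule.exists_sub_one_mem_and_smul_eq_zero_of_fg_of_le_smul J I' hfg
    (by
      intro w hw
      obtain ⟨d, hd, rfl⟩ := hpq w hw
      exact Submodule.sum_mem _ fun i _ => Submodule.sum_mem _ fun l _ =>
          Submodule.smul_mem_smul (hd i l) (hr _ _ (hp _)))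
  have hr0 : (r : B) = 0 := hann _ (fun w hw => hr2 w hw) (hcomm r)
  have h5 : ((r - 1 : Z) : B) ∈ I := hr1
  have h6 := I.neg_mem h5
  simpa [hr0] using h6

section Skew

variable [DecidableEq Obj] [∀ a b : Obj, Fintype (a ⟶ b)]
  [∀ a b : Obj, DecidableEq (a ⟶ b)]

/-- The skew groupoid ring `R ⋆_β 𝒢 = ⊕_{g ∈ 𝒢} E_g u_g`: families
`(x_g)_{g ∈ 𝒢}` with `x_g ∈ E_g = E_{r(g)}`. -/
def SkewRing (β : GpdAction Obj R) : Type :=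
  {f : Mor Obj → R // ∀ m : Mor Obj, f m * β.one m.2.1 = f m}

namespace SkewRing

variable {β : GpdAction Obj R}

instance : Add (SkewRing β) :=
  ⟨fun f g => ⟨fun m => f.1 m + g.1 m, fun m => by rw [add_mul, f.2 m, g.2 m]⟩⟩

instance : Zero (SkewRing β) := ⟨⟨fun _ => 0, fun m => by rw [zero_mul]⟩⟩

instance : Neg (SkewRing β) :=
  ⟨fun f => ⟨fun m => -f.1 m, fun m => by rw [neg_mul, f.2 m]⟩⟩

/-- Multiplication induced by `(x u_g)(y u_h) = x β_g(y 1_{g⁻¹}) u_{gh}` when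
`d(g) = r(h)` (and `0` otherwise): the component at `k : a ⟶ c` is
`Σ_{g : b ⟶ c} x_g β_g(y_{k ≫ g⁻¹} 1_{g⁻¹})`. -/
instance : Mul (SkewRing β) :=
  ⟨fun f f' =>
    ⟨fun m => ∑ b : Obj, ∑ g : b ⟶ m.2.1,
        f.1 ⟨b, m.2.1, g⟩ * β.act g (f'.1 ⟨m.1, b, m.2.2 ≫ Groupoid.inv g⟩),
      by
        intro m
        rw [Finset.sum_mul]
        refine Finset.sum_congr rfl fun b _ => ?_
        rw [Finset.sum_mul]
        refine Finset.sum_congr rfl fun g _ => ?_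
        rw [mul_assoc, β.act_mem]⟩⟩

/-- The "diagonal" element `Σ_{e ∈ 𝒢₀} (x·1_e) u_{id_e}` of the skew groupoid
ring associated with `x ∈ R`. -/
def diag (x : R) : SkewRing β :=
  ⟨fun m => if h : m.1 = m.2.1 then
      (if m.2.2 = (h ▸ 𝟙 m.1 : m.1 ⟶ m.2.1) then x * β.one m.1 else 0) else 0,
    by
      rintro ⟨a, b, g⟩
      by_cases h : a = b
      · subst h
        by_cases h' : g = 𝟙 a
        · simp [h', mul_assoc, β.one_idem]
        · simp [h']
      · simp [h]⟩

/-- The identity element `Σ_{e ∈ 𝒢₀} 1_e u_{id_e}`. -/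
instance : One (SkewRing β) := ⟨diag 1⟩

theorem coe_add (f g : SkewRing β) (m : Mor Obj) : (f + g).1 m = f.1 m + g.1 m := rfl

theorem coe_zero (m : Mor Obj) : (0 : SkewRing β).1 m = 0 := rfl

theorem diag_apply (x : R) (m : Mor Obj) :
    (diag (β := β) x).1 m = if h : m.1 = m.2.1 then
      (if m.2.2 = (h ▸ 𝟙 m.1 : m.1 ⟶ m.2.1) then x * β.one m.1 else 0) else 0 := rfl

theorem coe_mul (f f' : SkewRing β) (m : Mor Obj) :
    (f * f').1 m = ∑ b : Obj, ∑ g : b ⟶ m.2.1,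
      f.1 ⟨b, m.2.1, g⟩ * β.act g (f'.1 ⟨m.1, b, m.2.2 ≫ Groupoid.inv g⟩) := rfl

theorem diag_mul_apply (x : R) (f : SkewRing β) (m : Mor Obj) :
    (diag x * f).1 m = x * f.1 m := by
  rw [coe_mul]
  rw [Finset.sum_eq_single m.2.1]
  · rw [Finset.sum_eq_single (𝟙 m.2.1)]
    · have h1 : (diag (β := β) x).1 ⟨m.2.1, m.2.1, 𝟙 m.2.1⟩ = x * β.one m.2.1 := by
        simp [diag_apply]
      have h2 : (m.2.2 ≫ Groupoid.inv (𝟙 m.2.1) : m.1 ⟶ m.2.1) = m.2.2 := by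
        simp [Groupoid.inv_eq_inv]
      rw [h1, h2]
      have h3 : f.1 ⟨m.1, m.2.1, m.2.2⟩ = f.1 m := rfl
      have key : β.one m.2.1 * (f.1 m * β.one m.2.1) = f.1 m := by
        rw [f.2 m, β.one_central, f.2 m]
      rw [h3, β.act_id, mul_assoc, key]
    · intro g _ hg
      have h1 : (diag (β := β) x).1 ⟨m.2.1, m.2.1, g⟩ = 0 := by
        simp [diag_apply, hg]
      rw [h1, zero_mul]
    · intro h; exact absurd (Finset.mem_univ _) h
  · intro b _ hb
    refine Finset.sum_eq_zero fun g _ => ?_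
    have h1 : (diag (β := β) x).1 ⟨b, m.2.1, g⟩ = 0 := by
      rw [diag_apply]
      exact dif_neg hb
    rw [h1, zero_mul]
  · intro h; exact absurd (Finset.mem_univ _) h

theorem mul_diag_apply (f : SkewRing β) (x : R) (m : Mor Obj) :
    (f * diag x).1 m = f.1 m * β.act m.2.2 x := by
  rw [coe_mul]
  rw [Finset.sum_eq_single m.1]
  · rw [Finset.sum_eq_single m.2.2]
    · have h2 : (m.2.2 ≫ Groupoid.inv m.2.2 : m.1 ⟶ m.1) = 𝟙 m.1 :=
        Groupoid.comp_inv m.2.2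
      have h1 : (diag (β := β) x).1 ⟨m.1, m.1, m.2.2 ≫ Groupoid.inv m.2.2⟩
          = x * β.one m.1 := by
        simp [diag_apply, h2]
      rw [h1]
      have h3 : f.1 ⟨m.1, m.2.1, m.2.2⟩ = f.1 m := rfl
      rw [h3, β.act_proj]
    · intro g _ hg
      have h1 : (diag (β := β) x).1 ⟨m.1, m.1, m.2.2 ≫ Groupoid.inv g⟩ = 0 := by
        simp only [diag_apply]
        rw [dif_pos trivial]
        refine if_neg fun hEq => hg ?_
        have := congrArg (fun p => p ≫ g) hEq
        simp only [Category.assoc, Groupoid.inv_comp, Category.comp_id,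
          Category.id_comp] at this
        exact this.symm ▸ (by simp)
      rw [h1, β.act_zero, mul_zero]
    · intro h; exact absurd (Finset.mem_univ _) h
  · intro b _ hb
    refine Finset.sum_eq_zero fun g _ => ?_
    have h1 : (diag (β := β) x).1 ⟨m.1, b, m.2.2 ≫ Groupoid.inv g⟩ = 0 := by
      rw [diag_apply]
      exact dif_neg fun h => hb h.symm
    rw [h1, β.act_zero, mul_zero]
  · intro h; exact absurd (Finset.mem_univ _) h

noncomputable instance : Ring (SkewRing β) where
  add_assoc f g h := Subtype.ext (funext fun m => add_assoc _ _ _)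
  zero_add f := Subtype.ext (funext fun m => zero_add _)
  add_zero f := Subtype.ext (funext fun m => add_zero _)
  add_comm f g := Subtype.ext (funext fun m => add_comm _ _)
  neg_add_cancel f := Subtype.ext (funext fun m => neg_add_cancel _)
  nsmul := nsmulRec
  zsmul := zsmulRec
  left_distrib f g h := Subtype.ext (funext fun m => by
    simp only [coe_mul, coe_add, β.act_add, mul_add, Finset.sum_add_distrib])
  right_distrib f g h := Subtype.ext (funext fun m => by
    simp only [coe_mul, coe_add, add_mul, Finset.sum_add_distrib])
  zero_mul f := Subtype.ext (funext fun m => by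
    simp only [coe_mul, coe_zero, zero_mul, Finset.sum_const_zero])
  mul_zero f := Subtype.ext (funext fun m => by
    simp only [coe_mul, coe_zero, β.act_zero, mul_zero, Finset.sum_const_zero])
  mul_assoc f g h := Subtype.ext (funext fun m => by
    obtain ⟨a, d, k⟩ := m
    have act_sum : ∀ {x y : Obj} (gg : x ⟶ y) {ι : Type} (s : Finset ι) (F : ι → R),
        β.act gg (∑ i ∈ s, F i) = ∑ i ∈ s, β.act gg (F i) := by
      intro x y gg ι s F
      exact map_sum (AddMonoidHom.mk' (β.act gg) (β.act_add gg)) F s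
    simp only [coe_mul, act_sum, β.act_mul, Finset.sum_mul, Finset.mul_sum]
    have key : ∀ F : (b : Obj) → (b ⟶ d) → (c : Obj) → (c ⟶ d) → R,
        (∑ b : Obj, ∑ p : b ⟶ d, ∑ c : Obj, ∑ q : c ⟶ d, F b p c q) =
          ∑ c : Obj, ∑ q : c ⟶ d, ∑ b : Obj, ∑ p : b ⟶ d, F b p c q := by
      intro F
      calc (∑ b : Obj, ∑ p : b ⟶ d, ∑ c : Obj, ∑ q : c ⟶ d, F b p c q)
          = ∑ b : Obj, ∑ c : Obj, ∑ p : b ⟶ d, ∑ q : c ⟶ d, F b p c q :=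
            Finset.sum_congr rfl fun b _ => Finset.sum_comm
        _ = ∑ c : Obj, ∑ b : Obj, ∑ p : b ⟶ d, ∑ q : c ⟶ d, F b p c q :=
            Finset.sum_comm
        _ = ∑ c : Obj, ∑ b : Obj, ∑ q : c ⟶ d, ∑ p : b ⟶ d, F b p c q :=
            Finset.sum_congr rfl fun c _ => Finset.sum_congr rfl fun b _ =>
              Finset.sum_comm
        _ = ∑ c : Obj, ∑ q : c ⟶ d, ∑ b : Obj, ∑ p : b ⟶ d, F b p c q :=
            Finset.sum_congr rfl fun c _ => Finset.sum_comm
    rw [key]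
    refine Finset.sum_congr rfl fun c _ => Finset.sum_congr rfl fun q _ =>
      Finset.sum_congr rfl fun b _ => ?_
    refine (Fintype.sum_equiv (⟨fun r : b ⟶ c => r ≫ q, fun p => p ≫ Groupoid.inv q,
      fun r => by simp [Groupoid.inv_eq_inv], fun p => by simp [Groupoid.inv_eq_inv]⟩ :
        (b ⟶ c) ≃ (b ⟶ d)) _ _ fun r => ?_).symm
    show f.1 ⟨c, d, q⟩ * (β.act q (g.1 ⟨b, c, r⟩) *
        β.act q (β.act r (h.1 ⟨a, b, (k ≫ Groupoid.inv q) ≫ Groupoid.inv r⟩))) =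
      f.1 ⟨c, d, q⟩ * β.act q (g.1 ⟨b, c, (r ≫ q) ≫ Groupoid.inv q⟩) *
        β.act (r ≫ q) (h.1 ⟨a, b, k ≫ Groupoid.inv (r ≫ q)⟩)
    have h1 : (r ≫ q) ≫ Groupoid.inv q = r := by
      simp [Groupoid.inv_eq_inv]
    have h2 : (k ≫ Groupoid.inv (r ≫ q) : a ⟶ b) =
        (k ≫ Groupoid.inv q) ≫ Groupoid.inv r := by
      simp [Groupoid.inv_eq_inv]
    rw [h1, h2, β.act_comp, mul_assoc])
  one_mul f := Subtype.ext (funext fun m => by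
    show (diag 1 * f).1 m = f.1 m
    rw [diag_mul_apply, one_mul])
  mul_one f := Subtype.ext (funext fun m => by
    show (f * diag 1).1 m = f.1 m
    rw [mul_diag_apply]
    have h1 : β.act m.2.2 (1 : R) = β.one m.2.1 := by
      rw [← β.act_proj m.2.2 1, one_mul, β.act_one]
    rw [h1, f.2 m])

/-- The element `x u_{m₀}`, for `x ∈ E_{m₀}`. -/
noncomputable def single (m₀ : Mor Obj) (x : R) : SkewRing β :=
  ⟨fun m => if m = m₀ then x * β.one m₀.2.1 else 0,
    by
      intro m
      by_cases h : m = m₀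
      · subst h; simp [mul_assoc, β.one_idem]
      · simp [h]⟩

/-- The element `u_g` (i.e. `1_g u_g`). -/
noncomputable def u (m₀ : Mor Obj) : SkewRing β := single m₀ (β.one m₀.2.1)

end SkewRing

end Skew

section Stmt4

variable [DecidableEq Obj] [∀ a b : Obj, Fintype (a ⟶ b)]
  [∀ a b : Obj, DecidableEq (a ⟶ b)]

theorem GpdAction.mem_invSubring {β : GpdAction Obj R}
    {P : ∀ ⦃a b : Obj⦄, (a ⟶ b) → Prop} {r : R} :
    r ∈ β.invSubring P ↔
      ∀ ⦃a b : Obj⦄ (g : a ⟶ b), P g → β.act g r = r * β.one b :=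
  Iff.rfl

theorem SkewRing.diag_mul_diag {β : GpdAction Obj R} (x y : R) :
    (SkewRing.diag x : SkewRing β) * SkewRing.diag y = SkewRing.diag (x * y) := by
  refine Subtype.ext (funext fun m => ?_)
  rw [SkewRing.diag_mul_apply, SkewRing.diag_apply, SkewRing.diag_apply]
  by_cases h : m.1 = m.2.1
  · rw [dif_pos h, dif_pos h]
    split <;> simp [mul_assoc]
  · rw [dif_neg h, dif_neg h, mul_zero]

/-- The canonical embedding `C(R)^β → R ⋆_β 𝒢`, `c ↦ Σ_{e ∈ 𝒢₀} (c·1_e) u_{id_e}`. -/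
noncomputable def iotaC (β : GpdAction Obj R) : ↥β.centerInv →+* SkewRing β where
  toFun c := SkewRing.diag (c : R)
  map_one' := by
    show SkewRing.diag ((1 : ↥β.centerInv) : R) = SkewRing.diag 1
    norm_num
  map_mul' c d := by
    show SkewRing.diag ((c : R) * (d : R)) = _
    exact (SkewRing.diag_mul_diag _ _).symm
  map_zero' := by
    refine Subtype.ext (funext fun m => ?_)
    rw [SkewRing.diag_apply]
    show _ = (0 : SkewRing β).1 m
    rw [SkewRing.coe_zero]
    push_cast
    by_cases h : m.1 = m.2.1
    · rw [dif_pos h]; split <;> simp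
    · rw [dif_neg h]
  map_add' c d := by
    refine Subtype.ext (funext fun m => ?_)
    show _ = _ + _
    rw [SkewRing.diag_apply, SkewRing.diag_apply, SkewRing.diag_apply]
    push_cast
    by_cases h : m.1 = m.2.1
    · rw [dif_pos h, dif_pos h, dif_pos h]; split <;> simp [add_mul]
    · rw [dif_neg h, dif_neg h, dif_neg h, add_zero]

theorem iotaC_commute (β : GpdAction Obj R) (c : ↥β.centerInv)
    (f : SkewRing β) : iotaC β c * f = f * iotaC β c := by
  have hcen : (c : R) ∈ Subring.center R := (Subring.mem_inf.mp c.2).1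
  have hinv : (c : R) ∈ β.inv := (Subring.mem_inf.mp c.2).2
  refine Subtype.ext (funext fun m => ?_)
  show (SkewRing.diag (c : R) * f).1 m = (f * SkewRing.diag (c : R)).1 m
  rw [SkewRing.diag_mul_apply, SkewRing.mul_diag_apply,
    GpdAction.mem_invSubring.mp hinv m.2.2 trivial, ← mul_assoc,
    Subring.mem_center_iff.mp hcen (f.1 m), mul_assoc, f.2 m]

namespace SkewRing

variable {β : GpdAction Obj R}

theorem ext' {f g : SkewRing β} (h : ∀ m, f.1 m = g.1 m) : f = g := Subtype.ext (funext h)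

theorem coe_sum {ι : Type} (S : Finset ι) (f : ι → SkewRing β) (m : Mor Obj) :
    (∑ i ∈ S, f i).1 m = ∑ i ∈ S, (f i).1 m :=
  map_sum (AddMonoidHom.mk' (fun f : SkewRing β => f.1 m) (fun f g => coe_add f g m)) f S

variable (β) in
noncomputable def D : R →+* SkewRing β where
  toFun := diag
  map_one' := rfl
  map_mul' x y := (diag_mul_diag x y).symm
  map_zero' := by
    refine ext' fun m => ?_
    rw [diag_apply, coe_zero]
    by_cases h : m.1 = m.2.1
    · rw [dif_pos h]; split <;> simp
    · rw [dif_neg h]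
  map_add' x y := by
    refine ext' fun m => ?_
    rw [coe_add, diag_apply, diag_apply, diag_apply]
    by_cases h : m.1 = m.2.1
    · rw [dif_pos h, dif_pos h, dif_pos h]; split <;> simp [add_mul]
    · rw [dif_neg h, dif_neg h, dif_neg h, add_zero]

theorem D_mul_apply (x : R) (f : SkewRing β) (m : Mor Obj) : (D β x * f).1 m = x * f.1 m :=
  diag_mul_apply x f m

theorem mul_D_apply (x : R) (f : SkewRing β) (m : Mor Obj) :
    (f * D β x).1 m = f.1 m * β.act m.2.2 x :=
  mul_diag_apply f x m

variable (β) in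
def T : SkewRing β := ⟨fun m => β.one m.2.1, fun m => β.one_idem _⟩

theorem T_apply (m : Mor Obj) : (T β).1 m = β.one m.2.1 := rfl

theorem one_mul_act {a b : Obj} (g : a ⟶ b) (x : R) : β.one b * β.act g x = β.act g x := by
  rw [β.one_central, β.act_mem]

theorem eq_of_mul_one {r r' : R} (h : ∀ e, r * β.one e = r' * β.one e) : r = r' := by
  rw [← mul_one r, ← mul_one r', ← β.sum_one, Finset.mul_sum, Finset.mul_sum]
  exact Finset.sum_congr rfl fun e _ => h e

theorem D_T_inj {r r' : R} (h : D β r * T β = D β r' * T β) : r = r' := by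
  refine eq_of_mul_one (β := β) fun e => ?_
  have := congrArg (fun f : SkewRing β => f.1 ⟨e, e, 𝟙 e⟩) h
  simpa only [D_mul_apply, T_apply] using this

noncomputable def coef (a : SkewRing β) (x : R) : R :=
  ∑ c : Obj, ∑ b : Obj, ∑ g : b ⟶ c, a.1 ⟨b, c, g⟩ * β.act g x

theorem coef_mul_one (a : SkewRing β) (x : R) (c : Obj) :
    coef a x * β.one c = ∑ b : Obj, ∑ g : b ⟶ c, a.1 ⟨b, c, g⟩ * β.act g x := by
  rw [coef, Finset.sum_mul, Finset.sum_eq_single c]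
  · simp only [Finset.sum_mul, mul_assoc, β.act_mem]
  · intro d _ hd
    simp only [Finset.sum_mul]
    refine Finset.sum_eq_zero fun b _ => Finset.sum_eq_zero fun g _ => ?_
    rw [← β.act_mem g x, mul_assoc, mul_assoc, β.one_orth d c hd, mul_zero, mul_zero]
  · intro h; exact absurd (Finset.mem_univ _) h

theorem mul_D_T (a : SkewRing β) (x : R) : a * D β x * T β = D β (coef a x) * T β := by
  refine ext' fun m => ?_
  rw [mul_assoc, D_mul_apply, T_apply, coef_mul_one, coe_mul]
  simp only [D_mul_apply, T_apply, β.act_proj]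

variable (β) in
noncomputable def tr (r : R) : R := coef (T β) r

theorem T_D_T (r : R) : T β * D β r * T β = D β (tr β r) * T β := mul_D_T _ _

theorem tr_mem (r : R) : tr β r ∈ β.inv := by
  intro c d h _
  have act_sum : ∀ {x y : Obj} (gg : x ⟶ y) {ι : Type} (s : Finset ι) (F : ι → R),
      β.act gg (∑ i ∈ s, F i) = ∑ i ∈ s, β.act gg (F i) := by
    intro x y gg ι s F
    exact map_sum (AddMonoidHom.mk' (β.act gg) (β.act_add gg)) F s
  rw [← β.act_proj, tr, coef_mul_one, coef_mul_one, act_sum]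
  refine Finset.sum_congr rfl fun b _ => ?_
  rw [act_sum]
  simp only [T_apply, one_mul_act]
  refine Fintype.sum_equiv (⟨fun r : b ⟶ c => r ≫ h, fun p => p ≫ Groupoid.inv h,
      fun r => by simp [Groupoid.inv_eq_inv], fun p => by simp [Groupoid.inv_eq_inv]⟩ :
        (b ⟶ c) ≃ (b ⟶ d)) _ _ fun r => ?_
  exact (β.act_comp _ _ _).symm

theorem T_comm {b : R} (hb : b ∈ β.inv) : T β * D β b = D β b * T β := by
  refine ext' fun m => ?_
  rw [D_mul_apply, mul_D_apply, T_apply, one_mul_act]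
  exact hb m.2.2 trivial

theorem galois_one {n : ℕ} {x y : Fin n → R}
    (h1 : ∀ e : Obj, ∑ i, x i * β.act (𝟙 e) (y i * β.one e) = β.one e)
    (h2 : ∀ (a b : Obj) (g : a ⟶ b), ¬(∃ _ : a = b, HEq g (𝟙 a)) →
      ∑ i, x i * β.act g (y i * β.one a) = 0) :
    ∑ i, D β (x i) * T β * D β (y i) = 1 := by
  refine ext' ?_
  rintro ⟨a, b, g⟩
  rw [coe_sum]
  simp only [mul_D_apply, D_mul_apply, T_apply, mul_assoc, one_mul_act]
  change _ = (diag 1 : SkewRing β).1 _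
  rw [diag_apply]
  simp only [β.act_proj] at h1 h2
  by_cases hab : a = b
  · subst hab
    by_cases hg : g = 𝟙 a
    · subst hg; simp [h1]
    · rw [h2 a a g (by rintro ⟨_, h⟩; exact hg (eq_of_heq h))]
      simp [hg]
  · rw [h2 a b g (by rintro ⟨h, _⟩; exact hab h)]
    simp [hab]

theorem tr_add (r r' : R) : tr β (r + r') = tr β r + tr β r' := by
  apply D_T_inj (β := β)
  rw [← T_D_T, map_add, map_add, mul_add, add_mul, add_mul, T_D_T, T_D_T]

theorem tr_mul_left {b : R} (hb : b ∈ β.inv) (r : R) : tr β (b * r) = b * tr β r := by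
  apply D_T_inj (β := β)
  rw [← T_D_T, map_mul, map_mul, ← mul_assoc, T_comm hb]
  simp only [mul_assoc]
  rw [← T_D_T, mul_assoc]

theorem tr_mul_right {b : R} (hb : b ∈ β.inv) (r : R) : tr β (r * b) = tr β r * b := by
  apply D_T_inj (β := β)
  rw [← T_D_T, map_mul, map_mul, ← mul_assoc, mul_assoc, ← T_comm hb, ← mul_assoc, T_D_T,
    mul_assoc, T_comm hb, mul_assoc]

theorem galois_expand {n : ℕ} {x y : Fin n → R}
    (h : ∑ i, D β (x i) * T β * D β (y i) = 1) (r : R) :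
    ∑ i, x i * tr β (y i * r) = r := by
  apply D_T_inj (β := β)
  conv_rhs => rw [← one_mul (D β r), ← h]
  simp only [map_sum, Finset.sum_mul, map_mul]
  refine Finset.sum_congr rfl fun i _ => ?_
  rw [mul_assoc, ← T_D_T, map_mul]
  simp only [mul_assoc]

theorem galois_expand' {n : ℕ} {x y : Fin n → R}
    (h : ∑ i, D β (x i) * T β * D β (y i) = 1) (r : R) :
    ∑ i, D β (tr β (r * x i)) * T β * D β (y i) = T β * D β r := by
  conv_rhs => rw [← mul_one (T β * D β r), ← h, Finset.mul_sum]
  refine Finset.sum_congr rfl fun i _ => ?_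
  rw [← T_D_T, map_mul]
  simp only [mul_assoc]

end SkewRing

theorem exists_tr_one {k : Type} [CommRing k] (β : GpdAction Obj R) [Algebra k β.inv]
    (hsep : IsSepExt k β.inv) {n : ℕ} {x y : Fin n → R}
    (h : ∑ i, SkewRing.D β (x i) * SkewRing.T β * SkewRing.D β (y i) = 1) :
    ∃ c, SkewRing.tr β c = 1 := by
  let τ : R →+ β.inv := AddMonoidHom.mk' (fun r => ⟨SkewRing.tr β r, SkewRing.tr_mem r⟩)
    (fun a b => Subtype.ext (SkewRing.tr_add a b))
  have hτ : ∀ r, ((τ r : β.inv) : R) = SkewRing.tr β r := fun _ => rfl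
  have := one_mem_of_sep hsep τ.range ?_ ?_ (fun i => τ (x i)) (fun i => ⟨_, rfl⟩) ?_ ?_
  · obtain ⟨c, hc⟩ := this
    exact ⟨c, by rw [← hτ, hc]; rfl⟩
  · rintro b _ ⟨r, rfl⟩
    exact ⟨b * r, Subtype.ext (SkewRing.tr_mul_left b.2 r)⟩
  · rintro b _ ⟨r, rfl⟩
    exact ⟨r * b, Subtype.ext (SkewRing.tr_mul_right b.2 r)⟩
  · rintro _ ⟨r, rfl⟩
    refine ⟨fun i => τ (y i * r), fun i => ⟨_, rfl⟩, ?_⟩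
    conv_lhs => rw [← SkewRing.galois_expand h r, map_sum]
    exact Finset.sum_congr rfl fun i _ =>
      Subtype.ext (SkewRing.tr_mul_right (SkewRing.tr_mem _) _)
  · intro c hc hcomm
    apply Subtype.ext
    have h1 := SkewRing.galois_expand h (c : R)
    rw [← h1]
    refine Finset.sum_eq_zero fun i _ => ?_
    rw [SkewRing.tr_mul_right c.2]
    have h2 := hc (τ (y i)) ⟨_, rfl⟩
    rw [hcomm] at h2
    have h3 : SkewRing.tr β (y i) * (c : R) = 0 := congrArg Subtype.val h2
    rw [h3, mul_zero]

theorem sep_final {k : Type} [CommRing k] (β : GpdAction Obj R) [Algebra k β.inv]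
    [Algebra k (SkewRing β)]
    (hk : ∀ (c : k) (b : β.inv), SkewRing.D β ((c • b : β.inv) : R) = c • SkewRing.D β (b : R))
    (hsep : IsSepExt k β.inv) (hGal : β.IsGaloisExt) : IsSepExt k (SkewRing β) := by
  obtain ⟨n, x, y, g1, g2⟩ := hGal
  have h := SkewRing.galois_one g1 g2
  obtain ⟨c, hc⟩ := exists_tr_one β hsep h
  obtain ⟨N, s, t, h1, hcas⟩ := cas_of_sep hsep
  let D := SkewRing.D β
  let T := SkewRing.T β
  have hTcT : T * D c * T = T := by
    have := SkewRing.T_D_T (β := β) c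
    rw [hc, map_one, one_mul] at this
    exact this
  have hTD : ∀ b : β.inv, T * D (b : R) = D (b : R) * T := fun b => SkewRing.T_comm b.2
  -- the basic bilinear map
  let f : SkewRing β → SkewRing β → β.inv → β.inv → SkewRing β ⊗[k] SkewRing β :=
    fun p q u v => (p * D (u : R) * T * D c) ⊗ₜ[k] (D (v : R) * T * q)
  have hf : ∀ p q (b : β.inv), ∑ j, f p q (b * s j) (t j) = ∑ j, f p q (s j) (t j * b) := by
    intro p q
    refine hcas _ (f p q) ?_ ?_ ?_
    · intro u u' v
      simp only [f, Subring.coe_add, map_add, mul_add, add_mul, TensorProduct.add_tmul]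
    · intro u u' v
      simp only [f, Subring.coe_add, map_add, add_mul, TensorProduct.tmul_add]
    · intro d u v
      simp only [f, D, hk, mul_smul_comm, smul_mul_assoc, TensorProduct.smul_tmul]
  have hsum : ∑ j, D (s j : R) * D (t j : R) = 1 := by
    have := congrArg (fun b : β.inv => D (b : R)) h1
    simpa [map_sum] using this
  refine ⟨∑ i, ∑ j, f (D (x i)) (D (y i)) (s j) (t j), ?_, ?_⟩
  · simp only [map_sum, f, LinearMap.mul'_apply]
    rw [← h]
    refine Finset.sum_congr rfl fun i _ => ?_
    have e : ∀ j, D (x i) * D (s j : R) * T * D c * (D (t j : R) * T * D (y i)) =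
        D (x i) * (D (s j : R) * D (t j : R)) * (T * D (y i)) := by
      intro j
      rw [← hTD]
      calc _ = D (x i) * D (s j : R) * (T * D c * T) * D (t j : R) * D (y i) := by
            simp only [mul_assoc]
        _ = D (x i) * D (s j : R) * (T * D (t j : R)) * D (y i) := by
            rw [hTcT]; simp only [mul_assoc]
        _ = _ := by rw [hTD]; simp only [mul_assoc]
    simp only [e]
    rw [← Finset.sum_mul, ← Finset.mul_sum, hsum, mul_one, ← mul_assoc]
  · -- reduce to elements of the form D p * T * D q
    have key : ∀ p q : R, ((D p * T * D q) ⊗ₜ[k] (1 : SkewRing β)) *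
          (∑ i, ∑ j, f (D (x i)) (D (y i)) (s j) (t j)) =
        (∑ i, ∑ j, f (D (x i)) (D (y i)) (s j) (t j)) *
          ((1 : SkewRing β) ⊗ₜ[k] (D p * T * D q)) := by
      intro p q
      trans ∑ j, f (D p) (D q) (s j) (t j)
      · have e : ∀ i j, ((D p * T * D q) ⊗ₜ[k] (1 : SkewRing β)) *
            f (D (x i)) (D (y i)) (s j) (t j) =
            f (D p) (D (y i)) (⟨_, SkewRing.tr_mem (q * x i)⟩ * s j) (t j) := by
          intro i j
          simp only [f, Algebra.TensorProduct.tmul_mul_tmul, one_mul, Subring.coe_mul, map_mul]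
          congr 1
          calc _ = D p * (T * D (q * x i) * (D (s j : R) * T)) * D c := by
                rw [map_mul]; simp only [mul_assoc]
            _ = D p * (T * D (q * x i) * T) * D (s j : R) * D c := by
                rw [← hTD]; simp only [mul_assoc]
            _ = D p * D (SkewRing.tr β (q * x i)) * (T * D (s j : R)) * D c := by
                simp only [D, T]
                rw [SkewRing.T_D_T]; simp only [mul_assoc]
            _ = _ := by rw [hTD]; simp only [mul_assoc]
        simp only [Finset.mul_sum, e, hf]
        rw [Finset.sum_comm]
        refine Finset.sum_congr rfl fun j _ => ?_
        simp only [f, ← TensorProduct.tmul_sum]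
        congr 1
        have e2 := SkewRing.galois_expand' h q
        have e3 : T * D q = ∑ i, D (SkewRing.tr β (q * x i)) * T * D (y i) := e2.symm
        rw [mul_assoc (D (t j : R)) T (D q), e3, Finset.mul_sum]
        refine Finset.sum_congr rfl fun i _ => ?_
        rw [Subring.coe_mul, map_mul]
        simp only [mul_assoc]
      · have e : ∀ i j, f (D (x i)) (D (y i)) (s j) (t j) *
            ((1 : SkewRing β) ⊗ₜ[k] (D p * T * D q)) =
            f (D (x i)) (D q) (s j) (t j * ⟨_, SkewRing.tr_mem (y i * p)⟩) := by
          intro i j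
          simp only [f, Algebra.TensorProduct.tmul_mul_tmul, mul_one, Subring.coe_mul, map_mul]
          congr 1
          calc _ = D (t j : R) * (T * D (y i * p) * T) * D q := by
                rw [map_mul]; simp only [mul_assoc]
            _ = _ := by
                simp only [D, T]
                rw [SkewRing.T_D_T]; simp only [mul_assoc]
        simp only [Finset.sum_mul, e, ← hf]
        rw [Finset.sum_comm]
        refine Finset.sum_congr rfl fun j _ => ?_
        simp only [f, ← TensorProduct.sum_tmul]
        congr 1
        conv_lhs => rw [← SkewRing.galois_expand h p]
        simp only [map_sum, Finset.sum_mul, Subring.coe_mul, map_mul, mul_assoc]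
    intro a
    have ha : a = ∑ i, D (SkewRing.coef a (x i)) * T * D (y i) := by
      conv_lhs => rw [← mul_one a, ← h, Finset.mul_sum]
      refine Finset.sum_congr rfl fun i _ => ?_
      rw [← mul_assoc, ← mul_assoc, SkewRing.mul_D_T]
    rw [ha, TensorProduct.sum_tmul, TensorProduct.tmul_sum, Finset.sum_mul, Finset.mul_sum]
    exact Finset.sum_congr rfl fun i _ => key _ _

/-- if `R` is a `β`-Galois extension of `R^β` and `R^β` is
separable over `C(R)^β`, then the skew groupoid ring `R ⋆_β 𝒢` is separable
over `C(R)^β`. -/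
theorem skewRing_sepExt_of_galois
    (β : GpdAction Obj R) (hGal : β.IsGaloisExt)
    (hsep : SepOver R β.centerInv β.inv) :
    letI : CommRing ↥β.centerInv := commRingOfCentral R β.centerInv
      (fun x hx r => ((Subring.mem_center_iff.mp (Subring.mem_inf.mp hx).1) r).symm)
    letI : Algebra ↥β.centerInv (SkewRing β) :=
      RingHom.toAlgebra' (iotaC β) (fun c x => iotaC_commute β c x)
    IsSepExt ↥β.centerInv (SkewRing β) := by
  obtain ⟨hc, hle, hs⟩ := hsep
  letI i1 : CommRing ↥β.centerInv := commRingOfCentral R β.centerInv hc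
  letI i2 : Algebra ↥β.centerInv ↥β.inv := RingHom.toAlgebra' (Subring.inclusion hle)
      (fun c x => Subtype.ext (hc c.1 c.2 x.1))
  letI i3 : Algebra ↥β.centerInv (SkewRing β) :=
      RingHom.toAlgebra' (iotaC β) (fun c x => iotaC_commute β c x)
  refine sep_final (k := ↥β.centerInv) β ?_ hs hGal
  intro c b
  rw [Algebra.smul_def, Algebra.smul_def]
  exact map_mul (SkewRing.D β) (c : R) (b : R)

end Stmt4
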